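/- arXiv:2411.14601 — 2 statements merged into one kernel-verified Lean document; each statement's English description precedes it below -/
import Mathlib

section
/- Let h : ℝ^d → ℝ be convex and differentiable with L-Lipschitz gradient, L > 0. Let α : ℕ → ℝ be defined by α(0) = 1 and α(t+1) = 2/(1 + √(1 + 4/α(t)²)). Given z⁰ ∈ ℝ^d, set z̄⁰ := z⁰ and define iteratively z^{t+1} := z^t − (1/(L·α(t)))·∇h(α(t)·z^t + (1−α(t))·z̄^t) and z̄^{t+1} := α(t)·z^{t+1} + (1−α(t))·z̄^t. Then for every t ≥ 1 and every w ∈ ℝ^d: h(z̄^t) − h(w) ≤ (L·α(t−1)²/2)·‖z⁰ − w‖² ≤ (2L/(t+1)²)·‖z⁰ − w‖². -/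
/-!
The recursion makes `b = α (t + 1)` the positive root of `b² = (1 - b) a²`, where `a = α t`.
One step of the method satisfies, for every `w`,
`h z̄⁺ - h w + (L a² / 2) ‖z⁺ - w‖² ≤ (1 - a) (h z̄ - h w) + (L a² / 2) ‖z - w‖²`.
Indeed, the gradient `g` is taken at `y = a z + (1 - a) z̄`, and `z̄⁺ = y - g / L`. The decrease
`‖g‖² / (2 L)` given by the descent lemma cancels the quadratic term in the expansion of
`(L a² / 2) ‖z⁺ - w‖²`, and convexity at `y` bounds the linear term `a ⟪g, z - w⟫` from below.
Divided by `a²`, these inequalities telescope along the recursion, starting from `1 - α 0 = 0`.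
The explicit rate holds because `1 / α` grows by at least `1 / 2` at each step.
-/

section FirstOrder

variable {E : Type*} [NormedAddCommGroup E] [NormedSpace ℝ E] {f : E → ℝ}

theorem add_fderiv_sub_le_of_convexOn {s : Set E} {φ : E →L[ℝ] ℝ} {x y : E}
    (hf : ConvexOn ℝ s f) (hφ : HasFDerivAt f φ x) (hx : x ∈ s) (hy : y ∈ s) :
    f x + φ (y - x) ≤ f y := by
  have hderiv : HasDerivAt (f ∘ AffineMap.lineMap x y) (φ (y - x)) (0 : ℝ) :=
    HasFDerivAt.comp_hasDerivAt (0 : ℝ) (by simpa using hφ) AffineMap.hasDerivAt_lineMap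
  have hslope := (hf.comp_affineMap (AffineMap.lineMap x y)).le_slope_of_hasDerivAt
    (by simpa using hx) (by simpa using hy) zero_lt_one hderiv
  simp only [slope_def_field, Function.comp_apply, AffineMap.lineMap_apply_one,
    AffineMap.lineMap_apply_zero, sub_zero, div_one] at hslope
  linarith

theorem le_combination_add_fderiv_of_convexOn {s : Set E} {φ : E →L[ℝ] ℝ} {a : ℝ} {x z w : E}
    (hf : ConvexOn ℝ s f) (ha0 : 0 ≤ a) (ha1 : a ≤ 1)
    (hφ : HasFDerivAt f φ (a • z + (1 - a) • x))
    (hmem : a • z + (1 - a) • x ∈ s) (hx : x ∈ s) (hw : w ∈ s) :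
    f (a • z + (1 - a) • x) ≤ a * f w + (1 - a) * f x + a * φ (z - w) := by
  set y := a • z + (1 - a) • x with hy
  have tangent_w := mul_le_mul_of_nonneg_left (add_fderiv_sub_le_of_convexOn hf hφ hmem hw) ha0
  have tangent_x := mul_le_mul_of_nonneg_left (add_fderiv_sub_le_of_convexOn hf hφ hmem hx)
    (sub_nonneg.2 ha1)
  have hlinear : a * φ (w - y) + (1 - a) * φ (x - y) = -(a * φ (z - w)) := by
    simp only [hy, map_sub, map_add, map_smul, smul_eq_mul]
    ring
  linarith

theorem le_add_fderiv_sub_add_sq_of_lipschitz {f' : E → E →L[ℝ] ℝ} {L : ℝ} {x : E}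
    (hf : ∀ u, HasFDerivAt f (f' u) u) (hlip : ∀ u, ‖f' u - f' x‖ ≤ L * ‖u - x‖) (y : E) :
    f y ≤ f x + f' x (y - x) + L / 2 * ‖y - x‖ ^ 2 := by
  let γ : ℝ → E := AffineMap.lineMap x y
  have hγ (s : ℝ) : HasDerivAt (f ∘ γ) (f' (γ s) (y - x)) s :=
    (hf (γ s)).comp_hasDerivAt s AffineMap.hasDerivAt_lineMap
  let q (s : ℝ) : ℝ := f x + s * f' x (y - x) + s ^ 2 * (L / 2 * ‖y - x‖ ^ 2)
  have hq (s : ℝ) : HasDerivAt q (f' x (y - x) + s * (L * ‖y - x‖ ^ 2)) s := by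
    refine ((((hasDerivAt_id s).mul_const (f' x (y - x))).const_add (f x)).add
      ((hasDerivAt_pow 2 s).mul_const (L / 2 * ‖y - x‖ ^ 2))).congr_deriv ?_
    push_cast
    ring
  have hslope (s : ℝ) (hs : 0 ≤ s) :
      f' (γ s) (y - x) ≤ f' x (y - x) + s * (L * ‖y - x‖ ^ 2) := by
    have hdist : ‖γ s - x‖ = s * ‖y - x‖ := by
      simp [γ, AffineMap.lineMap_apply, norm_smul, abs_of_nonneg hs]
    rw [← sub_le_iff_le_add']
    calc f' (γ s) (y - x) - f' x (y - x) ≤ ‖(f' (γ s) - f' x) (y - x)‖ := Real.le_norm_self _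
      _ ≤ L * ‖γ s - x‖ * ‖y - x‖ := ContinuousLinearMap.le_of_opNorm_le _ (hlip _) _
      _ = s * (L * ‖y - x‖ ^ 2) := by rw [hdist]; ring
  have hle := image_le_of_deriv_right_le_deriv_boundary (a := 0) (b := 1)
    (fun s _ => (hγ s).continuousAt.continuousWithinAt) (fun s _ => (hγ s).hasDerivWithinAt)
    (by simp [γ, q]) (fun s _ => (hq s).continuousAt.continuousWithinAt)
    (fun s _ => (hq s).hasDerivWithinAt) (fun s hs => hslope s hs.1)
    (Set.right_mem_Icc.2 zero_le_one)
  simpa [γ, q] using hle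

end FirstOrder

section Iteration

variable {E : Type*} [NormedAddCommGroup E] [InnerProductSpace ℝ E]

theorem norm_sub_smul_sub_sq (c : ℝ) (z g w : E) :
    ‖z - c • g - w‖ ^ 2 = ‖z - w‖ ^ 2 - 2 * c * inner ℝ g (z - w) + c ^ 2 * ‖g‖ ^ 2 := by
  rw [sub_right_comm, norm_sub_sq_real, inner_smul_right, real_inner_comm, norm_smul, mul_pow,
    Real.norm_eq_abs, sq_abs]
  ring

variable [CompleteSpace E] {h : E → ℝ} {h' : E → E} {L : ℝ}

theorem gradient_step_le (hL : 0 < L) (hdiff : ∀ x, HasGradientAt h (h' x) x) {y : E}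
    (hlip : ∀ x, ‖h' x - h' y‖ ≤ L * ‖x - y‖) :
    h (y - (1 / L) • h' y) ≤ h y - 1 / (2 * L) * ‖h' y‖ ^ 2 := by
  have hdual (x : E) : ‖InnerProductSpace.toDual ℝ E (h' x) -
      InnerProductSpace.toDual ℝ E (h' y)‖ ≤ L * ‖x - y‖ := by
    rw [← map_sub, LinearIsometryEquiv.norm_map]
    exact hlip x
  calc h (y - (1 / L) • h' y)
      ≤ h y - 1 / L * ‖h' y‖ ^ 2 + L / 2 * ((1 / L) ^ 2 * ‖h' y‖ ^ 2) := by
        simpa [← sub_eq_add_neg, inner_smul_right, norm_smul, mul_pow] using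
          le_add_fderiv_sub_add_sq_of_lipschitz (fun x => (hdiff x).hasFDerivAt) hdual
            (y - (1 / L) • h' y)
    _ = h y - 1 / (2 * L) * ‖h' y‖ ^ 2 := by field_simp; ring

theorem nesterov_step_le (hL : 0 < L) (hconv : ConvexOn ℝ Set.univ h)
    (hdiff : ∀ x, HasGradientAt h (h' x) x)
    (hlip : ∀ x x', ‖h' x - h' x'‖ ≤ L * ‖x - x'‖) {a : ℝ} (ha0 : 0 < a) (ha1 : a ≤ 1)
    {z zb z' : E} (hz' : z' = z - (1 / (L * a)) • h' (a • z + (1 - a) • zb)) (w : E) :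
    h (a • z' + (1 - a) • zb) - h w + L * a ^ 2 / 2 * ‖z' - w‖ ^ 2 ≤
      (1 - a) * (h zb - h w) + L * a ^ 2 / 2 * ‖z - w‖ ^ 2 := by
  set y := a • z + (1 - a) • zb with hy
  have hlinear : h y ≤ a * h w + (1 - a) * h zb + a * inner ℝ (h' y) (z - w) :=
    le_combination_add_fderiv_of_convexOn hconv ha0.le ha1 (hdiff y).hasFDerivAt
      trivial trivial trivial
  have hdescent := gradient_step_le hL hdiff (fun x => hlip x y)
  have hgradientStep : a • z' + (1 - a) • zb = y - (1 / L) • h' y := by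
    have hscale : a * (1 / (L * a)) = 1 / L := by field_simp
    rw [hz', smul_sub, smul_smul, hscale, hy]
    abel
  have hdist : L * a ^ 2 / 2 * ‖z' - w‖ ^ 2 =
      L * a ^ 2 / 2 * ‖z - w‖ ^ 2 - a * inner ℝ (h' y) (z - w) + 1 / (2 * L) * ‖h' y‖ ^ 2 := by
    rw [hz', norm_sub_smul_sub_sq]
    field_simp
  rw [hgradientStep, hdist]
  linarith

theorem nesterov_energy_le (hL : 0 < L) (hconv : ConvexOn ℝ Set.univ h)
    (hdiff : ∀ x, HasGradientAt h (h' x) x)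
    (hlip : ∀ x x', ‖h' x - h' x'‖ ≤ L * ‖x - x'‖)
    {α : ℕ → ℝ} (hα0 : α 0 = 1) (hαpos : ∀ t, 0 < α t)
    (hαsq : ∀ t, α (t + 1) ^ 2 = (1 - α (t + 1)) * α t ^ 2) {z zb : ℕ → E}
    (hz : ∀ t, z (t + 1) = z t - (1 / (L * α t)) • h' (α t • z t + (1 - α t) • zb t))
    (hzb : ∀ t, zb (t + 1) = α t • z (t + 1) + (1 - α t) • zb t) (t : ℕ) (w : E) :
    h (zb (t + 1)) - h w + L * α t ^ 2 / 2 * ‖z (t + 1) - w‖ ^ 2 ≤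
      L * α t ^ 2 / 2 * ‖z 0 - w‖ ^ 2 := by
  induction t with
  | zero =>
    have hstep := nesterov_step_le hL hconv hdiff hlip (hαpos 0) hα0.le (hz 0) w
    rw [← hzb] at hstep
    simpa only [hα0, sub_self, zero_mul, zero_add] using hstep
  | succ t ih =>
    have hlt : 0 < 1 - α (t + 1) :=
      pos_of_mul_pos_left (hαsq t ▸ pow_pos (hαpos (t + 1)) 2) (sq_nonneg (α t))
    have hstep := nesterov_step_le hL hconv hdiff hlip (hαpos (t + 1)) (sub_pos.1 hlt).le
      (hz (t + 1)) w
    rw [← hzb] at hstep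
    have hweight (r : ℝ) : L * α (t + 1) ^ 2 / 2 * r = (1 - α (t + 1)) * (L * α t ^ 2 / 2 * r) := by
      rw [hαsq]
      ring
    calc h (zb (t + 1 + 1)) - h w + L * α (t + 1) ^ 2 / 2 * ‖z (t + 1 + 1) - w‖ ^ 2
        ≤ (1 - α (t + 1)) * (h (zb (t + 1)) - h w) +
            L * α (t + 1) ^ 2 / 2 * ‖z (t + 1) - w‖ ^ 2 := hstep
      _ = (1 - α (t + 1)) *
            (h (zb (t + 1)) - h w + L * α t ^ 2 / 2 * ‖z (t + 1) - w‖ ^ 2) := by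
          rw [hweight, mul_add]
      _ ≤ (1 - α (t + 1)) * (L * α t ^ 2 / 2 * ‖z 0 - w‖ ^ 2) := by gcongr
      _ = L * α (t + 1) ^ 2 / 2 * ‖z 0 - w‖ ^ 2 := (hweight _).symm

end Iteration

section Weights

/-- The successor of a weight `a` in Nesterov's method: for `a ≠ 0`, the positive root `b` of
`b ^ 2 = (1 - b) * a ^ 2`, in the form obtained by rationalizing the quadratic formula. -/
noncomputable def nesterovNext (a : ℝ) : ℝ :=
  2 / (1 + Real.sqrt (1 + 4 / a ^ 2))

theorem nesterovNext_pos (a : ℝ) : 0 < nesterovNext a := by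
  unfold nesterovNext
  positivity

theorem nesterovNext_sq {a : ℝ} (ha : a ≠ 0) :
    nesterovNext a ^ 2 = (1 - nesterovNext a) * a ^ 2 := by
  unfold nesterovNext
  set r := Real.sqrt (1 + 4 / a ^ 2) with hr
  have hr0 : 0 ≤ r := Real.sqrt_nonneg _
  have hsqrt : r ^ 2 * a ^ 2 = a ^ 2 + 4 := by
    rw [hr, Real.sq_sqrt (by positivity)]
    field_simp
  field_simp
  linarith

theorem inv_add_half_le_inv_nesterovNext (a : ℝ) : a⁻¹ + 1 / 2 ≤ (nesterovNext a)⁻¹ := by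
  have hsqrt : 2 / a ≤ Real.sqrt (1 + 4 / a ^ 2) := by
    apply Real.le_sqrt_of_sq_le
    rw [div_pow]
    norm_num
  rw [nesterovNext, inv_div]
  linarith [show 2 / a = 2 * a⁻¹ from div_eq_mul_inv 2 a]

variable {α : ℕ → ℝ}

theorem nesterov_weight_pos (hα0 : 0 < α 0) (hαrec : ∀ t, α (t + 1) = nesterovNext (α t)) :
    ∀ t, 0 < α t
  | 0 => hα0
  | t + 1 => hαrec t ▸ nesterovNext_pos (α t)

theorem nesterov_weight_le_two_div (hα0 : α 0 = 1)
    (hαrec : ∀ t, α (t + 1) = nesterovNext (α t)) (t : ℕ) : α t ≤ 2 / ((t : ℝ) + 2) := by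
  have hinv : ((t : ℝ) + 2) / 2 ≤ (α t)⁻¹ := by
    induction t with
    | zero => simp [hα0]
    | succ t ih =>
      have hgrowth := inv_add_half_le_inv_nesterovNext (α t)
      rw [hαrec]
      push_cast
      linarith
  rw [← inv_div]
  exact le_inv_of_le_inv₀ (by positivity) hinv

end Weights

theorem nesterov_convergence_general {E : Type*} [NormedAddCommGroup E] [InnerProductSpace ℝ E]
    [CompleteSpace E] (h : E → ℝ) (h' : E → E) (L : ℝ) (hL : 0 < L)
    (hconv : ConvexOn ℝ Set.univ h)
    (hdiff : ∀ x, HasGradientAt h (h' x) x)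
    (hlip : ∀ x x', ‖h' x - h' x'‖ ≤ L * ‖x - x'‖)
    (α : ℕ → ℝ) (hα0 : α 0 = 1)
    (hαrec : ∀ t, α (t + 1) = 2 / (1 + Real.sqrt (1 + 4 / (α t) ^ 2)))
    (z zb : ℕ → E)
    (hz : ∀ t, z (t + 1) = z t - (1 / (L * α t)) • h' (α t • z t + (1 - α t) • zb t))
    (hzb : ∀ t, zb (t + 1) = α t • z (t + 1) + (1 - α t) • zb t) :
    ∀ t : ℕ, 1 ≤ t → ∀ w : E,
      h (zb t) - h w ≤ L * (α (t - 1)) ^ 2 / 2 * ‖z 0 - w‖ ^ 2 ∧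
      L * (α (t - 1)) ^ 2 / 2 * ‖z 0 - w‖ ^ 2 ≤ 2 * L / ((t : ℝ) + 1) ^ 2 * ‖z 0 - w‖ ^ 2 := by
  have hαpos := nesterov_weight_pos (hα0 ▸ one_pos) hαrec
  have hαsq (t : ℕ) : α (t + 1) ^ 2 = (1 - α (t + 1)) * α t ^ 2 :=
    hαrec t ▸ nesterovNext_sq (hαpos t).ne'
  rintro (_ | t) ht w
  · contradiction
  rw [Nat.add_sub_cancel]
  constructor
  · have henergy := nesterov_energy_le hL hconv hdiff hlip hα0 hαpos hαsq hz hzb t w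
    exact (le_add_of_nonneg_right (by positivity)).trans henergy
  · refine mul_le_mul_of_nonneg_right ?_ (sq_nonneg _)
    calc L * α t ^ 2 / 2 ≤ L * (2 / ((t : ℝ) + 2)) ^ 2 / 2 := by
          gcongr
          · exact (hαpos t).le
          · exact nesterov_weight_le_two_div hα0 hαrec t
      _ = 2 * L / (((t + 1 : ℕ) : ℝ) + 1) ^ 2 := by
          push_cast
          field_simp
          ring

/-- Convergence of Nesterov's accelerated gradient method for a convex function
with `L`-Lipschitz gradient: `h(z̄^t) − h(w) ≤ (Lα(t−1)²/2)‖z⁰ − w‖² ≤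
(2L/(t+1)²)‖z⁰ − w‖²` for all `t ≥ 1`. -/
theorem nesterov_convergence (d : ℕ)
    (h : EuclideanSpace ℝ (Fin d) → ℝ)
    (h' : EuclideanSpace ℝ (Fin d) → EuclideanSpace ℝ (Fin d))
    (L : ℝ) (hL : 0 < L)
    (hconv : ConvexOn ℝ Set.univ h)
    (hdiff : ∀ x, HasGradientAt h (h' x) x)
    (hlip : ∀ x x', ‖h' x - h' x'‖ ≤ L * ‖x - x'‖)
    (α : ℕ → ℝ) (hα0 : α 0 = 1)
    (hαrec : ∀ t, α (t + 1) = 2 / (1 + Real.sqrt (1 + 4 / (α t) ^ 2)))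
    (z zb : ℕ → EuclideanSpace ℝ (Fin d)) (hzb0 : zb 0 = z 0)
    (hz : ∀ t, z (t + 1) = z t - (1 / (L * α t)) • h' (α t • z t + (1 - α t) • zb t))
    (hzb : ∀ t, zb (t + 1) = α t • z (t + 1) + (1 - α t) • zb t) :
    ∀ t : ℕ, 1 ≤ t → ∀ w : EuclideanSpace ℝ (Fin d),
      h (zb t) - h w ≤ L * (α (t - 1)) ^ 2 / 2 * ‖z 0 - w‖ ^ 2 ∧
      L * (α (t - 1)) ^ 2 / 2 * ‖z 0 - w‖ ^ 2 ≤ 2 * L / ((t : ℝ) + 1) ^ 2 * ‖z 0 - w‖ ^ 2 :=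
  nesterov_convergence_general h h' L hL hconv hdiff hlip α hα0 hαrec z zb hz hzb
end

section
/- Let f : ℝ^{dx} → ℝ be convex and differentiable with Lx-Lipschitz gradient and g : ℝ^{dy} → ℝ be convex and differentiable with Ly-Lipschitz gradient, Lx, Ly > 0, and let B ∈ ℝ^{dy×dx}. Suppose x* ∈ ℝ^{dx}, y* ∈ ℝ^{dy} satisfy ∇f(x*) + Bᵀy* = 0 and ∇g(y*) = Bx*. Set βx := 1/(4Ly) and βy := 1/(4Lx). Then for all x, x_in ∈ ℝ^{dx} and y, y_in ∈ ℝ^{dy}: f(x) − f(x*) + g(y) − g(y*) + ⟨Bᵀy*, x − x*⟩ − ⟨Bx*, y − y*⟩ + (βx/2)(‖Bx − ∇g(y_in)‖² − ‖Bx* − ∇g(y_in)‖²) + (βy/2)(‖Bᵀy + ∇f(x_in)‖² − ‖Bᵀy* + ∇f(x_in)‖²) ≥ D_f(x, x*) + D_g(y, y*) + (βx/4)‖B(x − x*)‖² + (βy/4)‖Bᵀ(y − y*)‖² − (1/2)·D_f(x_in, x*) − (1/2)·D_g(y_in, y*). -/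
open scoped RealInnerProductSpace Matrix

/-! At a saddle point the linear coupling terms turn the primal-dual gap into
`D_f(x, x*) + D_g(y, y*)`, so only the two regularization terms remain, and they decouple. Each has
the form `‖p‖² - ‖p*‖²`, where `p - p*` is `B(x - x*)` or `Bᵀ(y - y*)`, while `‖p*‖` is the distance
between the gradients at the input point and at the saddle point. The parallelogram-type bound
`‖p - p*‖² ≤ 2‖p‖² + 2‖p*‖²` yields the quadratic term and leaves a multiple of `‖p*‖²`, which
cocoercivity of the gradient bounds by half of the Bregman divergence at the input point. -/

theorem norm_sub_sq_le_two_mul_add {E : Type*} [SeminormedAddGroup E] (a b : E) :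
    ‖a - b‖ ^ 2 ≤ 2 * (‖a‖ ^ 2 + ‖b‖ ^ 2) :=
  (pow_le_pow_left₀ (norm_nonneg _) (norm_sub_le a b) 2).trans add_sq_le

theorem norm_image_sub_sub_le_of_fderiv_lipschitz {E F : Type*}
    [NormedAddCommGroup E] [NormedSpace ℝ E] [NormedAddCommGroup F] [NormedSpace ℝ F]
    {φ : E → F} {φ' : E → E →L[ℝ] F} {L : ℝ} {x : E}
    (hφ : ∀ y, HasFDerivAt φ (φ' y) y) (hlip : ∀ y, ‖φ' y - φ' x‖ ≤ L * ‖y - x‖) (y : E) :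
    ‖φ y - φ x - φ' x (y - x)‖ ≤ L / 2 * ‖y - x‖ ^ 2 := by
  set d := y - x
  let r (t : ℝ) : F := φ (x + t • d) - φ x - t • φ' x d
  have hr (t : ℝ) : HasDerivAt r (φ' (x + t • d) d - φ' x d) t := by
    have hline : HasDerivAt (fun t : ℝ => x + t • d) d t := by
      simpa using ((hasDerivAt_id t).smul_const d).const_add x
    have hlin : HasDerivAt (fun t : ℝ => t • φ' x d) (φ' x d) t := by
      simpa using (hasDerivAt_id t).smul_const (φ' x d)
    exact (((hφ _).comp_hasDerivAt t hline).sub_const (φ x)).sub hlin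
  have hbound (t : ℝ) : HasDerivAt (fun t : ℝ => L / 2 * ‖d‖ ^ 2 * t ^ 2) (L * t * ‖d‖ ^ 2) t :=
    ((hasDerivAt_pow 2 t).const_mul (L / 2 * ‖d‖ ^ 2)).congr_deriv (by norm_num; ring)
  have hr_le : ∀ t ∈ Set.Ico (0 : ℝ) 1, ‖φ' (x + t • d) d - φ' x d‖ ≤ L * t * ‖d‖ ^ 2 := by
    intro t ht
    calc ‖φ' (x + t • d) d - φ' x d‖ ≤ ‖φ' (x + t • d) - φ' x‖ * ‖d‖ :=
          (φ' (x + t • d) - φ' x).le_opNorm d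
      _ ≤ L * ‖x + t • d - x‖ * ‖d‖ := by gcongr; exact hlip _
      _ = L * t * ‖d‖ ^ 2 := by
          rw [add_sub_cancel_left, norm_smul, Real.norm_of_nonneg ht.1]; ring
  have hr_one := image_norm_le_of_norm_deriv_right_le_deriv_boundary
    (fun t _ => (hr t).continuousAt.continuousWithinAt) (fun t _ => (hr t).hasDerivWithinAt)
    (by simp [r]) hbound hr_le (Set.right_mem_Icc.2 zero_le_one)
  simpa [r, d] using hr_one

section BregmanDivergence

variable {E : Type*} [NormedAddCommGroup E] [InnerProductSpace ℝ E]

/-- The Bregman divergence `D_h(x, x')` of a function `h` with gradient map `h'`. The gradient is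
an explicit argument, so that the definition makes sense for an arbitrary map `h'`. -/
def bregmanDiv (h : E → ℝ) (h' : E → E) (x x' : E) : ℝ :=
  h x - h x' - ⟪h' x', x - x'⟫

variable {h : E → ℝ} {h' : E → E} {L : ℝ}

theorem bregmanDiv_three_point (h : E → ℝ) (h' : E → E) (x y z : E) :
    bregmanDiv h h' x z =
      bregmanDiv h h' x y + bregmanDiv h h' y z + ⟪h' y - h' z, x - y⟫ := by
  have hsplit : x - z = (x - y) + (y - z) := (sub_add_sub_cancel x y z).symm
  rw [bregmanDiv, bregmanDiv, bregmanDiv, hsplit, inner_add_right, inner_sub_left]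
  ring

-- The derivative hypothesis is `HasGradientAt` without the completeness that `toDual` requires.
theorem bregmanDiv_le_of_lipschitz (hd : ∀ x, HasFDerivAt h (innerSL ℝ (h' x)) x)
    (hlip : ∀ x x', ‖h' x - h' x'‖ ≤ L * ‖x - x'‖) (x x' : E) :
    bregmanDiv h h' x x' ≤ L / 2 * ‖x - x'‖ ^ 2 := by
  have hlip_dual (y : E) : ‖innerSL ℝ (h' y) - innerSL ℝ (h' x')‖ ≤ L * ‖y - x'‖ := by
    rw [← map_sub, innerSL_apply_norm]
    exact hlip y x'
  exact (le_abs_self _).trans (norm_image_sub_sub_le_of_fderiv_lipschitz hd hlip_dual x)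

-- Compare `h` with its tangent at `x'` after one gradient step of length `1 / L` from `x` for the
-- function `h - ⟪h' x', ·⟫`, which `x'` minimizes.
theorem norm_gradient_sub_sq_le_mul_bregmanDiv (hL : 0 < L)
    (hconv : ∀ x x', 0 ≤ bregmanDiv h h' x x') (hd : ∀ x, HasFDerivAt h (innerSL ℝ (h' x)) x)
    (hlip : ∀ x x', ‖h' x - h' x'‖ ≤ L * ‖x - x'‖) (x x' : E) :
    ‖h' x - h' x'‖ ^ 2 ≤ 2 * L * bregmanDiv h h' x x' := by
  set v := h' x - h' x'
  set w := x - L⁻¹ • v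
  have hstep : w - x = -(L⁻¹ • v) := sub_sub_cancel_left x _
  have hdescent : bregmanDiv h h' w x ≤ L⁻¹ / 2 * ‖v‖ ^ 2 := by
    calc bregmanDiv h h' w x ≤ L / 2 * ‖w - x‖ ^ 2 := bregmanDiv_le_of_lipschitz hd hlip w x
      _ = L⁻¹ / 2 * ‖v‖ ^ 2 := by
          rw [hstep, norm_neg, norm_smul, Real.norm_of_nonneg (inv_nonneg.2 hL.le)]
          field_simp
  have hinner : ⟪v, w - x⟫ = -(L⁻¹ * ‖v‖ ^ 2) := by
    rw [hstep, inner_neg_right, real_inner_smul_right, real_inner_self_eq_norm_sq]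
  have hlower : L⁻¹ / 2 * ‖v‖ ^ 2 ≤ bregmanDiv h h' x x' := by
    have htangent := hconv w x'
    rw [bregmanDiv_three_point h h' w x x', hinner] at htangent
    linarith
  calc ‖v‖ ^ 2 = 2 * L * (L⁻¹ / 2 * ‖v‖ ^ 2) := by field_simp
    _ ≤ 2 * L * bregmanDiv h h' x x' := by gcongr

theorem quarter_norm_sq_sub_half_bregmanDiv_le {β : ℝ} (hL : 0 < L) (hβ₀ : 0 ≤ β)
    (hβ : β ≤ 1 / (4 * L))
    (hconv : ∀ x x', 0 ≤ bregmanDiv h h' x x') (hd : ∀ x, HasFDerivAt h (innerSL ℝ (h' x)) x)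
    (hlip : ∀ x x', ‖h' x - h' x'‖ ≤ L * ‖x - x'‖) (u z z' : E) :
    β / 4 * ‖u‖ ^ 2 - 1 / 2 * bregmanDiv h h' z z' ≤
      β / 2 * (‖u + (h' z - h' z')‖ ^ 2 - ‖h' z - h' z'‖ ^ 2) := by
  set v := h' z - h' z'
  have hquad : β / 4 * ‖u‖ ^ 2 ≤ β / 4 * (2 * (‖u + v‖ ^ 2 + ‖v‖ ^ 2)) := by
    gcongr
    simpa using norm_sub_sq_le_two_mul_add (u + v) v
  have hcoco : β * ‖v‖ ^ 2 ≤ 1 / 2 * bregmanDiv h h' z z' := by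
    calc β * ‖v‖ ^ 2 ≤ 1 / (4 * L) * (2 * L * bregmanDiv h h' z z') := by
          gcongr
          exact norm_gradient_sub_sq_le_mul_bregmanDiv hL hconv hd hlip z z'
      _ = 1 / 2 * bregmanDiv h h' z z' := by field_simp; ring
  linarith

end BregmanDivergence

theorem regularized_gap_inequality_general {E F : Type*}
    [NormedAddCommGroup E] [InnerProductSpace ℝ E] [NormedAddCommGroup F] [InnerProductSpace ℝ F]
    {f : E → ℝ} {f' : E → E} {g : F → ℝ} {g' : F → F} (B : E →ₗ[ℝ] F) (C : F →ₗ[ℝ] E)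
    {Lx Ly βx βy : ℝ} (hLx : 0 < Lx) (hLy : 0 < Ly)
    (hfconv : ∀ x x', 0 ≤ bregmanDiv f f' x x') (hfd : ∀ x, HasFDerivAt f (innerSL ℝ (f' x)) x)
    (hflip : ∀ x x', ‖f' x - f' x'‖ ≤ Lx * ‖x - x'‖)
    (hgconv : ∀ y y', 0 ≤ bregmanDiv g g' y y') (hgd : ∀ y, HasFDerivAt g (innerSL ℝ (g' y)) y)
    (hglip : ∀ y y', ‖g' y - g' y'‖ ≤ Ly * ‖y - y'‖)
    {xs : E} {ys : F} (hxs : f' xs + C ys = 0) (hys : g' ys = B xs)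
    (hβx₀ : 0 ≤ βx) (hβx : βx ≤ 1 / (4 * Ly)) (hβy₀ : 0 ≤ βy) (hβy : βy ≤ 1 / (4 * Lx))
    (x xin : E) (y yin : F) :
    bregmanDiv f f' x xs + bregmanDiv g g' y ys +
          βx / 4 * ‖B (x - xs)‖ ^ 2 + βy / 4 * ‖C (y - ys)‖ ^ 2 -
          1 / 2 * bregmanDiv f f' xin xs - 1 / 2 * bregmanDiv g g' yin ys ≤
      f x - f xs + (g y - g ys) + ⟪C ys, x - xs⟫ - ⟪B xs, y - ys⟫ +
        βx / 2 * (‖B x - g' yin‖ ^ 2 - ‖B xs - g' yin‖ ^ 2) +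
        βy / 2 * (‖C y + f' xin‖ ^ 2 - ‖C ys + f' xin‖ ^ 2) := by
  have hC : C ys = -f' xs := (neg_eq_of_add_eq_zero_right hxs).symm
  have hgap : f x - f xs + (g y - g ys) + ⟪C ys, x - xs⟫ - ⟪B xs, y - ys⟫ =
      bregmanDiv f f' x xs + bregmanDiv g g' y ys := by
    rw [hC, ← hys, inner_neg_left, bregmanDiv, bregmanDiv]
    ring
  have hprimal : βx / 4 * ‖B (x - xs)‖ ^ 2 - 1 / 2 * bregmanDiv g g' yin ys ≤
      βx / 2 * (‖B x - g' yin‖ ^ 2 - ‖B xs - g' yin‖ ^ 2) := by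
    have hmove : B (xs - x) + (g' yin - g' ys) = g' yin - B x := by rw [map_sub, hys]; abel
    have hblock := quarter_norm_sq_sub_half_bregmanDiv_le hLy hβx₀ hβx hgconv hgd hglip
      (B (xs - x)) yin ys
    rwa [hmove, hys, norm_sub_rev (g' yin) (B x), norm_sub_rev (g' yin) (B xs),
      ← neg_sub x xs, map_neg, norm_neg] at hblock
  have hdual : βy / 4 * ‖C (y - ys)‖ ^ 2 - 1 / 2 * bregmanDiv f f' xin xs ≤
      βy / 2 * (‖C y + f' xin‖ ^ 2 - ‖C ys + f' xin‖ ^ 2) := by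
    have hmove : C (y - ys) + (f' xin - f' xs) = C y + f' xin := by rw [map_sub, hC]; abel
    have hbase : f' xin - f' xs = C ys + f' xin := by rw [hC]; abel
    have hblock := quarter_norm_sq_sub_half_bregmanDiv_le hLx hβy₀ hβy hfconv hfd hflip
      (C (y - ys)) xin xs
    rwa [hmove, hbase] at hblock
  linarith

/-- Key regularized gap inequality: at a saddle point `(x*, y*)` (i.e.
`∇f(x*) + Bᵀy* = 0`, `∇g(y*) = Bx*`), with `βx = 1/(4Ly)`, `βy = 1/(4Lx)`, the
regularized primal-dual gap dominates the Bregman divergences plus quadratic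
terms, up to half the Bregman divergences at the input point. -/
theorem regularized_gap_inequality (dx dy : ℕ)
    (f : EuclideanSpace ℝ (Fin dx) → ℝ)
    (f' : EuclideanSpace ℝ (Fin dx) → EuclideanSpace ℝ (Fin dx))
    (g : EuclideanSpace ℝ (Fin dy) → ℝ)
    (g' : EuclideanSpace ℝ (Fin dy) → EuclideanSpace ℝ (Fin dy))
    (B : Matrix (Fin dy) (Fin dx) ℝ) (Lx Ly : ℝ) (hLx : 0 < Lx) (hLy : 0 < Ly)
    (hfconv : ∀ x x', 0 ≤ f x - f x' - ⟪f' x', x - x'⟫)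
    (hfd : ∀ x, HasGradientAt f (f' x) x)
    (hflip : ∀ x x', ‖f' x - f' x'‖ ≤ Lx * ‖x - x'‖)
    (hgconv : ∀ y y', 0 ≤ g y - g y' - ⟪g' y', y - y'⟫)
    (hgd : ∀ y, HasGradientAt g (g' y) y)
    (hglip : ∀ y y', ‖g' y - g' y'‖ ≤ Ly * ‖y - y'‖)
    (xs : EuclideanSpace ℝ (Fin dx)) (ys : EuclideanSpace ℝ (Fin dy))
    (hopt1 : f' xs + Matrix.toEuclideanLin Bᵀ ys = 0)
    (hopt2 : g' ys = Matrix.toEuclideanLin B xs)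
    (βx βy : ℝ) (hβx : βx = 1 / (4 * Ly)) (hβy : βy = 1 / (4 * Lx)) :
    ∀ (x xin : EuclideanSpace ℝ (Fin dx)) (y yin : EuclideanSpace ℝ (Fin dy)),
      f x - f xs + (g y - g ys) +
          ⟪Matrix.toEuclideanLin Bᵀ ys, x - xs⟫ - ⟪Matrix.toEuclideanLin B xs, y - ys⟫ +
          βx / 2 * (‖Matrix.toEuclideanLin B x - g' yin‖ ^ 2 -
            ‖Matrix.toEuclideanLin B xs - g' yin‖ ^ 2) +
          βy / 2 * (‖Matrix.toEuclideanLin Bᵀ y + f' xin‖ ^ 2 -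
            ‖Matrix.toEuclideanLin Bᵀ ys + f' xin‖ ^ 2) ≥
        (f x - f xs - ⟪f' xs, x - xs⟫) + (g y - g ys - ⟪g' ys, y - ys⟫) +
          βx / 4 * ‖Matrix.toEuclideanLin B (x - xs)‖ ^ 2 +
          βy / 4 * ‖Matrix.toEuclideanLin Bᵀ (y - ys)‖ ^ 2 -
          1 / 2 * (f xin - f xs - ⟪f' xs, xin - xs⟫) -
          1 / 2 * (g yin - g ys - ⟪g' ys, yin - ys⟫) := by
  intro x xin y yin
  exact regularized_gap_inequality_general (Matrix.toEuclideanLin B) (Matrix.toEuclideanLin Bᵀ)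
    hLx hLy hfconv hfd hflip hgconv hgd hglip hopt1 hopt2
    (hβx ▸ by positivity) hβx.le (hβy ▸ by positivity) hβy.le x xin y yin
end
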